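/- (Normalisation by evaluation) Let P and Q be cut-free named GS4 derivations with conclusions ⊢Γ,A and ⊢Γ,Ā respectively, where all elements of the context Γ are atomic named formulas. Then there is a cut-free named GS4 derivation R with conclusion ⊢Γ such that ⟨⟨R⟩⟩ = ⟨⟨P⟩⟩ ⊙_A ⟨⟨Q⟩⟩. -/

import Mathlib

open scoped Classical

noncomputable section

namespace GS4

/-- Named classical propositional formulas over atoms `α`, with names in `ℕ`. -/
inductive NForm (α : Type) : Type
  | atom : ℕ → α → NForm α
  | or   : NForm α → NForm α → NForm α
  | and  : NForm α → NForm α → NForm α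

variable {α : Type}

/-- Name-preserving De Morgan negation, w.r.t. an involution `bar` on atoms. -/
def negF (bar : α → α) : NForm α → NForm α
  | .atom x a => .atom x (bar a)
  | .or A B => .and (negF bar A) (negF bar B)
  | .and A B => .or (negF bar A) (negF bar B)

/-- The set of names occurring in a named formula. -/
def NForm.names : NForm α → Set ℕ
  | .atom x _ => {x}
  | .or A B => A.names ∪ B.names
  | .and A B => A.names ∪ B.names

/-- A named formula is sharing-free if every name occurs at most once in it. -/
def NForm.sharingFree : NForm α → Prop
  | .atom _ _ => True
  | .or A B => A.sharingFree ∧ B.sharingFree ∧ Disjoint A.names B.names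
  | .and A B => A.sharingFree ∧ B.sharingFree ∧ Disjoint A.names B.names

def NForm.isAtom : NForm α → Prop
  | .atom _ _ => True
  | _ => False

/-- Anonymous formulas (shapes): `A ≡ B` iff their shapes coincide. -/
inductive Shape (α : Type) : Type
  | atom : α → Shape α
  | or   : Shape α → Shape α → Shape α
  | and  : Shape α → Shape α → Shape α

def NForm.shape : NForm α → Shape α
  | .atom _ a => .atom a
  | .or A B => .or A.shape B.shape
  | .and A B => .and A.shape B.shape

/-- `HasAtom A x a`: the atomic formula `x:a` occurs in `A`. -/
def HasAtom : NForm α → ℕ → α → Prop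
  | .atom y b, x, a => y = x ∧ b = a
  | .or A B, x, a => HasAtom A x a ∨ HasAtom B x a
  | .and A B, x, a => HasAtom A x a ∨ HasAtom B x a

/-- Names of a finite set of named formulas. -/
def snames (Γ : Finset (NForm α)) : Set ℕ := ⋃ A ∈ Γ, A.names

/-- A finite set of named formulas is sharing-free if all its elements are
sharing-free with pairwise disjoint name sets. -/
def SFSet (Γ : Finset (NForm α)) : Prop :=
  (∀ A ∈ Γ, A.sharingFree) ∧
  ∀ A ∈ Γ, ∀ B ∈ Γ, A ≠ B → Disjoint A.names B.names

/-- `x:a` occurs in some formula of `Γ` (i.e. `Γ[x] = a` for sharing-free `Γ`). -/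
def HasAtomS (Γ : Finset (NForm α)) (x : ℕ) (a : α) : Prop :=
  ∃ A ∈ Γ, HasAtom A x a

/-- Branch sets of named formulas. -/
def BrF : NForm α → Set (Set ℕ)
  | .atom x _ => {{x}}
  | .or A B => {X | ∃ Y ∈ BrF A, ∃ Z ∈ BrF B, X = Y ∪ Z}
  | .and A B => BrF A ∪ BrF B

/-- Branch sets of sequents (finite sharing-free sets of named formulas). -/
def BrS (Γ : Finset (NForm α)) : Set (Set ℕ) :=
  {X | X ⊆ snames Γ ∧ ∀ A ∈ Γ, X ∩ A.names ∈ BrF A}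

/-! ## Branch-labeled name graphs -/

/-- A branch-labeled name graph: vertices and a relation between unordered
pairs of vertices and branch labels. -/
structure BLGraph : Type where
  verts : Set ℕ
  rel : Sym2 ℕ → Set ℕ → Prop

/-- Well-formedness of a bl-graph: related pairs consist of distinct vertices,
labels are sets of vertices, and each edge is included in its labels. -/
def BLGraph.IsBL (G : BLGraph) : Prop :=
  ∀ e X, G.rel e X → ¬ e.IsDiag ∧ X ⊆ G.verts ∧ ∀ v ∈ e, v ∈ X

def BLGraph.Edges (G : BLGraph) : Set (Sym2 ℕ) := {e | ∃ X, G.rel e X}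

def BLGraph.Br (G : BLGraph) : Set (Set ℕ) := {X | ∃ e, G.rel e X}

def BLGraph.union (G H : BLGraph) : BLGraph :=
  ⟨G.verts ∪ H.verts, fun e X => G.rel e X ∨ H.rel e X⟩

/-- Restriction `G↾_S` of a bl-graph. -/
def BLGraph.restrict (G : BLGraph) (S : Set ℕ) : BLGraph :=
  ⟨G.verts ∩ S, fun e X => G.rel e X ∧ X ⊆ S⟩

/-- The interface-relativized edge-branch relation `e ⊰^I_G X`. -/
def BLGraph.relI (G : BLGraph) (I : Set ℕ) (e : Sym2 ℕ) (X : Set ℕ) : Prop :=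
  ∃ Y, G.rel e Y ∧ X = Y \ I

/-- `z 0, …, z (n-1)` is an `X`-labeled alternating path between `G` and `H`
through the interface `I`. -/
def AltPath (G H : BLGraph) (I X : Set ℕ) (n : ℕ) (z : ℕ → ℕ) : Prop :=
  1 < n ∧
  (∀ i < n, ∀ j < n, z i = z j → i = j) ∧
  (∀ i, 0 < i → i + 1 < n → z i ∈ I) ∧
  ((∀ i, i + 1 < n →
      (Even i → G.relI I s(z i, z (i + 1)) X) ∧ (¬ Even i → H.relI I s(z i, z (i + 1)) X)) ∨
   (∀ i, i + 1 < n →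
      (Even i → H.relI I s(z i, z (i + 1)) X) ∧ (¬ Even i → G.relI I s(z i, z (i + 1)) X)))

/-- Composition of bl-graphs over an interface `I`. -/
def BLGraph.comp (G H : BLGraph) (I : Set ℕ) : BLGraph :=
  ⟨(G.verts ∪ H.verts) \ I,
   fun e X => ∃ n z, AltPath G H I X n z ∧ z 0 ∉ I ∧ z (n - 1) ∉ I ∧
     e = s(z 0, z (n - 1))⟩

/-- The weakening operator on bl-graphs: add vertices `V` and extend every
branch label by a member of `Brs`. -/
def blwk (V : Set ℕ) (Brs : Set (Set ℕ)) (G : BLGraph) : BLGraph :=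
  ⟨G.verts ∪ V, fun e X => ∃ Y Z, G.rel e Y ∧ Z ∈ Brs ∧ X = Y ∪ Z⟩

/-- The bl-identity graph `id_{A,C}` on a pair of dual formulas. -/
def blid : NForm α → NForm α → BLGraph
  | .atom x _, .atom y _ => ⟨{x, y}, fun e X => e = s(x, y) ∧ X = {x, y}⟩
  | .or A1 A2, .and C1 C2 =>
      (blwk A2.names (BrF A2) (blid A1 C1)).union (blwk A1.names (BrF A1) (blid A2 C2))
  | .and A1 A2, .or C1 C2 =>
      (blwk C2.names (BrF C2) (blid A1 C1)).union (blwk C1.names (BrF C1) (blid A2 C2))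
  | _, _ => ⟨∅, fun _ _ => False⟩

/-! ## Simple name graphs -/

/-- A simple name graph. -/
structure NGraph : Type where
  verts : Set ℕ
  edges : Set (Sym2 ℕ)

/-- Subgraph relation `H ⊑ G`. -/
def NGraph.Sub (H G : NGraph) : Prop := H.verts ⊆ G.verts ∧ H.edges ⊆ G.edges

def NGraph.union (G H : NGraph) : NGraph := ⟨G.verts ∪ H.verts, G.edges ∪ H.edges⟩

/-- Induced subgraph `G↾_S`. -/
def NGraph.restrict (G : NGraph) (S : Set ℕ) : NGraph :=
  ⟨G.verts ∩ S, {e ∈ G.edges | ∀ v ∈ e, v ∈ S}⟩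

/-- Alternating paths between simple name graphs through an interface. -/
def NAltPath (G H : NGraph) (I : Set ℕ) (n : ℕ) (z : ℕ → ℕ) : Prop :=
  0 < n ∧
  (∀ i < n, ∀ j < n, z i = z j → i = j) ∧
  (∀ i, 0 < i → i + 1 < n → z i ∈ I) ∧
  ((∀ i, i + 1 < n →
      (Even i → s(z i, z (i + 1)) ∈ G.edges) ∧ (¬ Even i → s(z i, z (i + 1)) ∈ H.edges)) ∨
   (∀ i, i + 1 < n →
      (Even i → s(z i, z (i + 1)) ∈ H.edges) ∧ (¬ Even i → s(z i, z (i + 1)) ∈ G.edges)))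

/-- Composition of simple name graphs over an interface. -/
def NGraph.comp (G H : NGraph) (I : Set ℕ) : NGraph :=
  ⟨(G.verts ∪ H.verts) \ I,
   {e | ∃ x y, x ≠ y ∧ x ∈ (G.verts ∪ H.verts) \ I ∧ y ∈ (G.verts ∪ H.verts) \ I ∧
        e = s(x, y) ∧ ∃ n z, NAltPath G H I n z ∧ z 0 = x ∧ z (n - 1) = y}⟩

/-- The identity graph `Id_{A,C}` on a pair of dual formulas. -/
def idg : NForm α → NForm α → NGraph
  | .atom x _, .atom y _ => ⟨{x, y}, {s(x, y)}⟩
  | .or A1 A2, .and C1 C2 => (idg A1 C1).union (idg A2 C2)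
  | .and A1 A2, .or C1 C2 => (idg A1 C1).union (idg A2 C2)
  | _, _ => ⟨∅, ∅⟩

/-- The edgeless (weakening) graph on the names of `Γ`. -/
def wkg (Γ : Finset (NForm α)) : NGraph := ⟨snames Γ, ∅⟩

/-! ## Named GS4 derivations -/

/-- Named GS4 derivation trees. -/
inductive Deriv (α : Type) : Type
  | ax (Γ : Finset (NForm α)) (A C : NForm α)
  | cut (A : NForm α) (P Q : Deriv α)
  | sup (P Q : Deriv α)
  | orI (A B : NForm α) (P : Deriv α)
  | andI (A B : NForm α) (P Q : Deriv α)

/-- Conclusion of a derivation tree. -/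
def concl : Deriv α → Finset (NForm α)
  | .ax Γ A C => insert A (insert C Γ)
  | .cut A P _ => (concl P).erase A
  | .sup P _ => concl P
  | .orI A B P => insert (NForm.or A B) (((concl P).erase A).erase B)
  | .andI A B P _ => insert (NForm.and A B) ((concl P).erase A)

/-- Well-formedness of derivation trees w.r.t. the atom involution `bar`:
each rule is applied correctly to sharing-free named sequents. -/
def WF (bar : α → α) : Deriv α → Prop
  | .ax Γ A C =>
      A.shape = (negF bar C).shape ∧
      A.sharingFree ∧ C.sharingFree ∧ SFSet Γ ∧
      Disjoint A.names C.names ∧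
      Disjoint A.names (snames Γ) ∧ Disjoint C.names (snames Γ)
  | .cut A P Q =>
      WF bar P ∧ WF bar Q ∧
      ∃ Γ : Finset (NForm α), A ∉ Γ ∧ negF bar A ∉ Γ ∧
        concl P = insert A Γ ∧ concl Q = insert (negF bar A) Γ ∧
        A.sharingFree ∧ SFSet Γ ∧ Disjoint A.names (snames Γ)
  | .sup P Q => WF bar P ∧ WF bar Q ∧ concl P = concl Q
  | .orI A B P =>
      WF bar P ∧
      ∃ Γ : Finset (NForm α), A ∉ Γ ∧ B ∉ Γ ∧ A ≠ B ∧
        concl P = insert A (insert B Γ) ∧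
        A.sharingFree ∧ B.sharingFree ∧ SFSet Γ ∧
        Disjoint A.names B.names ∧
        Disjoint A.names (snames Γ) ∧ Disjoint B.names (snames Γ)
  | .andI A B P Q =>
      WF bar P ∧ WF bar Q ∧
      ∃ Γ : Finset (NForm α), A ∉ Γ ∧ B ∉ Γ ∧
        concl P = insert A Γ ∧ concl Q = insert B Γ ∧
        A.sharingFree ∧ B.sharingFree ∧ SFSet Γ ∧
        Disjoint A.names B.names ∧
        Disjoint A.names (snames Γ) ∧ Disjoint B.names (snames Γ)

/-- A derivation is cut-free if it contains no cut rule. -/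
def CutFree : Deriv α → Prop
  | .ax _ _ _ => True
  | .cut _ _ _ => False
  | .sup P Q => CutFree P ∧ CutFree Q
  | .orI _ _ P => CutFree P
  | .andI _ _ P Q => CutFree P ∧ CutFree Q

/-- The branch-labeled axiom graph `⟨⟨P⟩⟩` of a derivation. -/
def blaxg : Deriv α → BLGraph
  | .ax Γ A C => blwk (snames Γ) (BrS Γ) (blid A C)
  | .cut A P Q => BLGraph.comp (blaxg P) (blaxg Q) A.names
  | .sup P Q => (blaxg P).union (blaxg Q)
  | .orI _ _ P => blaxg P
  | .andI _ _ P Q => (blaxg P).union (blaxg Q)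

/-- The (simple) axiom graph `⟦P⟧` of a derivation. -/
def axg : Deriv α → NGraph
  | .ax Γ A C => (wkg Γ).union (idg A C)
  | .cut A P Q => NGraph.comp (axg P) (axg Q) A.names
  | .sup P Q => (axg P).union (axg Q)
  | .orI _ _ P => axg P
  | .andI _ _ P Q => (axg P).union (axg Q)

/-! ## Inversion and isolation -/

/-- Inversion of a disjunction `D ∨ E` in the conclusion. -/
def inv (D E : NForm α) : Deriv α → Deriv α
  | .ax Γ A C =>
      if A = NForm.or D E then
        match C with
        | .and C1 C2 =>
            .andI C1 C2 (.ax (insert E Γ) D C1) (.ax (insert D Γ) E C2)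
        | _ => .ax Γ A C
      else if C = NForm.or D E then
        match A with
        | .and A1 A2 =>
            .andI A1 A2 (.ax (insert E Γ) A1 D) (.ax (insert D Γ) A2 E)
        | _ => .ax Γ A C
      else
        .ax (insert D (insert E (Γ.erase (NForm.or D E)))) A C
  | .cut A P Q => .cut A (inv D E P) (inv D E Q)
  | .sup P Q => .sup (inv D E P) (inv D E Q)
  | .orI A B P => if A = D ∧ B = E then P else .orI A B (inv D E P)
  | .andI A B P Q => .andI A B (inv D E P) (inv D E Q)

/-- Left inversion of a conjunction `D ∧ E` in the conclusion. -/
def invl (D E : NForm α) : Deriv α → Deriv α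
  | .ax Γ A C =>
      if A = NForm.and D E then
        match C with
        | .or C1 C2 => .orI C1 C2 (.ax (insert C2 Γ) D C1)
        | _ => .ax Γ A C
      else if C = NForm.and D E then
        match A with
        | .or A1 A2 => .orI A1 A2 (.ax (insert A2 Γ) A1 D)
        | _ => .ax Γ A C
      else
        .ax (insert D (Γ.erase (NForm.and D E))) A C
  | .cut A P Q => .cut A (invl D E P) (invl D E Q)
  | .sup P Q => .sup (invl D E P) (invl D E Q)
  | .orI A B P => .orI A B (invl D E P)
  | .andI A B P Q => if A = D ∧ B = E then P else .andI A B (invl D E P) (invl D E Q)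

/-- Right inversion of a conjunction `D ∧ E` in the conclusion. -/
def invr (D E : NForm α) : Deriv α → Deriv α
  | .ax Γ A C =>
      if A = NForm.and D E then
        match C with
        | .or C1 C2 => .orI C1 C2 (.ax (insert C1 Γ) E C2)
        | _ => .ax Γ A C
      else if C = NForm.and D E then
        match A with
        | .or A1 A2 => .orI A1 A2 (.ax (insert A1 Γ) A2 E)
        | _ => .ax Γ A C
      else
        .ax (insert E (Γ.erase (NForm.and D E))) A C
  | .cut A P Q => .cut A (invr D E P) (invr D E Q)
  | .sup P Q => .sup (invr D E P) (invr D E Q)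
  | .orI A B P => .orI A B (invr D E P)
  | .andI A B P Q => if A = D ∧ B = E then Q else .andI A B (invr D E P) (invr D E Q)

/-- Isolation of a non-atomic formula in the conclusion. -/
def isl : NForm α → Deriv α → Deriv α
  | .or A B, P => .orI A B (inv A B P)
  | .and A B, P => .andI A B (invl A B P) (invr A B P)
  | .atom _ _, P => P

/-- Totality of a bl-graph w.r.t. a sharing-free named sequent. -/
def Total (bar : α → α) (G : BLGraph) (Γ : Finset (NForm α)) : Prop :=
  G.verts = snames Γ ∧
  G.Br = BrS Γ ∧
  ∀ x y : ℕ, s(x, y) ∈ G.Edges →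
    ∀ a b : α, HasAtomS Γ x a → HasAtomS Γ y b → a = bar b

end GS4

/-!
A graph that is total for a sequent is realised by a cut-free derivation: over atoms it is a
superposition of axioms, a disjunction can be opened without changing the graph, and over a
conjunction the graph splits along the branches of the two conjuncts.

So it suffices that totality is preserved by composition along `A`. The main point is that every
branch `X` of `Γ` labels some complete alternating path. If there were not even a complete walk
labeled `X`, then recording how each name of `A` is reached by walks from outside would split the
names of `A` into two sets such that no edge of the first graph that is compatible with `X` avoids
the second set, and no such edge of the second graph avoids the first set. But by determinacy of
formula evaluation, either `A` has a branch inside the first set or `Ā` has one inside the second,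
and by totality the union of this branch with `X` labels, hence contains, an edge. A complete walk
can be shortened to a path because edges link dual atoms and crossing the interface dualises them:
the walk always reaches a given name of `A` from the same graph.
-/

namespace GS4

open scoped SetFamily

variable {α : Type} {bar : α → α} {A B C D : NForm α} {Γ Δ Θ : Finset (NForm α)}
  {G H : BLGraph} {x y : ℕ} {a b : α} {X : Set ℕ}

theorem NForm.names_nonempty (A : NForm α) : A.names.Nonempty := by
  induction A with
  | atom x _ => exact Set.singleton_nonempty x
  | or A B ihA _ | and A B ihA _ => exact ihA.inl

theorem NForm.ne_of_disjoint_names (h : Disjoint A.names B.names) : A ≠ B := by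
  rintro rfl
  exact A.names_nonempty.ne_empty (disjoint_self.1 h)

theorem NForm.finite_names (A : NForm α) : A.names.Finite := by
  induction A with
  | atom x _ => exact Set.finite_singleton x
  | or A B ihA ihB | and A B ihA ihB => exact ihA.union ihB

theorem names_negF (bar : α → α) (A : NForm α) : (negF bar A).names = A.names := by
  induction A <;> simp_all [negF, NForm.names]

theorem hasAtom_negF (hbar : Function.Involutive bar) :
    HasAtom (negF bar A) x a ↔ HasAtom A x (bar a) := by
  induction A with
  | atom y b => simp [negF, HasAtom, hbar.eq_iff]
  | or A B ihA ihB | and A B ihA ihB => simp [negF, HasAtom, ihA, ihB]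

theorem NForm.mem_names : x ∈ A.names ↔ ∃ a, HasAtom A x a := by
  induction A with
  | atom y b => simp [NForm.names, HasAtom, eq_comm]
  | or A B ihA ihB | and A B ihA ihB => simp [NForm.names, HasAtom, ihA, ihB, exists_or]

theorem mem_snames : x ∈ snames Γ ↔ ∃ a, HasAtomS Γ x a := by
  simp only [snames, Set.mem_iUnion₂, NForm.mem_names, HasAtomS]
  exact ⟨fun ⟨A, hA, a, h⟩ => ⟨a, A, hA, h⟩, fun ⟨a, A, hA, h⟩ => ⟨A, hA, a, h⟩⟩

theorem names_subset_snames (hA : A ∈ Γ) : A.names ⊆ snames Γ :=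
  Set.subset_biUnion_of_mem (u := NForm.names) hA

theorem finite_snames (Γ : Finset (NForm α)) : (snames Γ).Finite :=
  Γ.finite_toSet.biUnion fun A _ => A.finite_names

theorem snames_insert (A : NForm α) (Γ : Finset (NForm α)) :
    snames (insert A Γ) = A.names ∪ snames Γ := by
  simp [snames]

theorem snames_singleton (A : NForm α) : snames {A} = A.names := by
  simp [snames]

theorem snames_union (Γ Δ : Finset (NForm α)) : snames (Γ ∪ Δ) = snames Γ ∪ snames Δ :=
  Finset.set_biUnion_union Γ Δ _

theorem hasAtomS_insert : HasAtomS (insert A Γ) x a ↔ HasAtom A x a ∨ HasAtomS Γ x a := by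
  simp [HasAtomS]

theorem hasAtomS_singleton : HasAtomS {A} x a ↔ HasAtom A x a := by
  simp [HasAtomS]

theorem hasAtomS_union : HasAtomS (Γ ∪ Δ) x a ↔ HasAtomS Γ x a ∨ HasAtomS Δ x a := by
  simp [HasAtomS, or_and_right, exists_or]

theorem notMem_of_disjoint_snames (h : Disjoint A.names (snames Γ)) : A ∉ Γ := fun hA =>
  NForm.ne_of_disjoint_names (h.mono_right (names_subset_snames hA)) rfl

theorem sfSet_insert (hA : A ∉ Γ) :
    SFSet (insert A Γ) ↔ A.sharingFree ∧ Disjoint A.names (snames Γ) ∧ SFSet Γ := by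
  have hne : ∀ B ∈ Γ, A ≠ B := fun B hB h => hA (h ▸ hB)
  simp only [SFSet, snames, Set.disjoint_iUnion₂_right, Finset.forall_mem_insert, ne_eq,
    not_true_eq_false, false_implies, true_and]
  constructor
  · rintro ⟨⟨hsA, hsΓ⟩, hAΓ, hΓ⟩
    exact ⟨hsA, fun B hB => hAΓ B hB (hne B hB), hsΓ, fun B hB => (hΓ B hB).2⟩
  · rintro ⟨hsA, hd, hsΓ, hΓ⟩
    exact ⟨⟨hsA, hsΓ⟩, fun B hB _ => hd B hB, fun B hB => ⟨fun _ => (hd B hB).symm, hΓ B hB⟩⟩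

theorem HasAtom.unique (hA : A.sharingFree) (ha : HasAtom A x a) (hb : HasAtom A x b) :
    a = b := by
  induction A with
  | atom y c => exact ha.2.symm.trans hb.2
  | or A B ihA ihB | and A B ihA ihB =>
    obtain ⟨hA, hB, hd⟩ := hA
    rcases ha with ha | ha <;> rcases hb with hb | hb
    · exact ihA hA ha hb
    · exact (Set.disjoint_left.1 hd (NForm.mem_names.2 ⟨_, ha⟩) (NForm.mem_names.2 ⟨_, hb⟩)).elim
    · exact (Set.disjoint_left.1 hd (NForm.mem_names.2 ⟨_, hb⟩) (NForm.mem_names.2 ⟨_, ha⟩)).elim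
    · exact ihB hB ha hb

theorem HasAtomS.unique (hΓ : SFSet Γ) (ha : HasAtomS Γ x a) (hb : HasAtomS Γ x b) : a = b := by
  obtain ⟨A, hA, ha⟩ := ha
  obtain ⟨B, hB, hb⟩ := hb
  obtain rfl : A = B := by
    by_contra hne
    exact Set.disjoint_left.1 (hΓ.2 A hA B hB hne) (NForm.mem_names.2 ⟨_, ha⟩)
      (NForm.mem_names.2 ⟨_, hb⟩)
  exact ha.unique (hΓ.1 A hA) hb

/-- The total function `p` extends the partial function `x ↦ Γ[x]` from names to atoms. -/
def IsLabelling (p : ℕ → α) (Γ : Finset (NForm α)) : Prop :=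
  ∀ x a, HasAtomS Γ x a → p x = a

theorem SFSet.exists_isLabelling [Nonempty α] (hΓ : SFSet Γ) : ∃ p, IsLabelling p Γ := by
  refine ⟨fun x => Classical.epsilon (HasAtomS Γ x), fun x a h => ?_⟩
  exact HasAtomS.unique hΓ (Classical.epsilon_spec ⟨a, h⟩) h

/-! ## Branches -/

theorem BrF_or (A B : NForm α) : BrF (A.or B) = BrF A ⊻ BrF B := by
  ext X
  simp [BrF, Set.mem_sups, eq_comm]

theorem subset_names_of_mem_BrF (h : X ∈ BrF A) : X ⊆ A.names := by
  induction A generalizing X with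
  | atom y c => exact (Set.mem_singleton_iff.1 h).subset
  | or A B ihA ihB =>
    obtain ⟨Y, hY, Z, hZ, rfl⟩ := h
    exact Set.union_subset_union (ihA hY) (ihB hZ)
  | and A B ihA ihB =>
    rcases h with h | h
    · exact (ihA h).trans Set.subset_union_left
    · exact (ihB h).trans Set.subset_union_right

theorem nonempty_of_mem_BrF (h : X ∈ BrF A) : X.Nonempty := by
  induction A generalizing X with
  | atom y c => exact h ▸ Set.singleton_nonempty y
  | or A B ihA _ =>
    obtain ⟨Y, hY, Z, -, rfl⟩ := h
    exact (ihA hY).inl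
  | and A B ihA ihB => exact h.elim ihA ihB

theorem BrS_singleton (A : NForm α) : BrS {A} = BrF A := by
  ext X
  simp only [BrS, snames_singleton, Finset.mem_singleton, forall_eq, Set.mem_ofPred_eq]
  constructor
  · rintro ⟨hX, h⟩
    rwa [Set.inter_eq_left.2 hX] at h
  · intro h
    have hX := subset_names_of_mem_BrF h
    exact ⟨hX, by rwa [Set.inter_eq_left.2 hX]⟩

theorem BrS_union (h : Disjoint (snames Γ) (snames Δ)) : BrS (Γ ∪ Δ) = BrS Γ ⊻ BrS Δ := by
  ext X
  rw [Set.mem_sups]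
  constructor
  · rintro ⟨hX, hbr⟩
    refine ⟨X ∩ snames Γ, ⟨Set.inter_subset_right, fun A hA => ?_⟩, X ∩ snames Δ,
      ⟨Set.inter_subset_right, fun A hA => ?_⟩, ?_⟩
    · rw [Set.inter_assoc, Set.inter_eq_right.2 (names_subset_snames hA)]
      exact hbr A (Finset.mem_union_left _ hA)
    · rw [Set.inter_assoc, Set.inter_eq_right.2 (names_subset_snames hA)]
      exact hbr A (Finset.mem_union_right _ hA)
    · exact (Set.inter_union_distrib_left ..).symm.trans
        (Set.inter_eq_left.2 (snames_union Γ Δ ▸ hX))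
  · rintro ⟨Y, ⟨hYΓ, hY⟩, Z, ⟨hZΔ, hZ⟩, rfl⟩
    refine ⟨snames_union Γ Δ ▸ Set.union_subset_union hYΓ hZΔ, fun A hA => ?_⟩
    change (Y ∪ Z) ∩ A.names ∈ BrF A
    rw [Set.union_inter_distrib_right]
    rcases Finset.mem_union.1 hA with hA | hA
    · rw [(h.symm.mono hZΔ (names_subset_snames hA)).inter_eq, Set.union_empty]
      exact hY A hA
    · rw [(h.mono hYΓ (names_subset_snames hA)).inter_eq, Set.empty_union]
      exact hZ A hA

theorem BrS_insert (h : Disjoint A.names (snames Γ)) : BrS (insert A Γ) = BrF A ⊻ BrS Γ := by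
  rw [← snames_singleton] at h
  rw [Finset.insert_eq, BrS_union h, BrS_singleton]

theorem BrS_pair (h : Disjoint A.names B.names) : BrS {A, B} = BrF A ⊻ BrF B := by
  rw [BrS_insert (by rwa [snames_singleton]), BrS_singleton]

theorem BrS_insert_or (hAB : Disjoint A.names B.names) (hA : Disjoint A.names (snames Γ))
    (hB : Disjoint B.names (snames Γ)) :
    BrS (insert (A.or B) Γ) = BrS (insert A (insert B Γ)) := by
  rw [BrS_insert (A := A.or B) (hA.union_left hB), BrF_or,
    BrS_insert (by simpa [snames_insert] using ⟨hAB, hA⟩), BrS_insert hB, Set.sups_assoc]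

theorem BrS_insert_and (hA : Disjoint A.names (snames Γ)) (hB : Disjoint B.names (snames Γ)) :
    BrS (insert (A.and B) Γ) = BrS (insert A Γ) ∪ BrS (insert B Γ) := by
  rw [BrS_insert (A := A.and B) (hA.union_left hB), BrS_insert hA, BrS_insert hB, BrF,
    Set.sups_union_left]

theorem BrS_of_forall_isAtom (h : ∀ A ∈ Γ, A.isAtom) : BrS Γ = {snames Γ} := by
  have hBrF : ∀ A ∈ Γ, BrF A = {A.names} := fun A hA => by
    cases A with
    | atom x a => rfl
    | or A B | and A B => exact (h _ hA).elim
  ext X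
  constructor
  · rintro ⟨hX, hbr⟩
    refine hX.antisymm (Set.iUnion₂_subset fun A hA => ?_)
    have hXA := hbr A hA
    rw [hBrF A hA] at hXA
    exact Set.inter_eq_right.1 hXA
  · rintro rfl
    refine ⟨subset_rfl, fun A hA => ?_⟩
    rw [hBrF A hA]
    exact Set.inter_eq_right.2 (names_subset_snames hA)

/-- Determinacy of formula evaluation, read off branches. -/
theorem exists_branch_subset_or_compl (bar : α → α) (A : NForm α) (S : Set ℕ) :
    (∃ X ∈ BrF A, X ⊆ S) ∨ ∃ X ∈ BrF (negF bar A), X ⊆ Sᶜ := by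
  induction A with
  | atom x a =>
    by_cases h : x ∈ S
    · exact .inl ⟨{x}, rfl, by simpa⟩
    · exact .inr ⟨{x}, rfl, by simpa⟩
  | or A B ihA ihB =>
    rcases ihA with ⟨X, hX, hXS⟩ | ⟨X, hX, hXS⟩
    · rcases ihB with ⟨Y, hY, hYS⟩ | ⟨Y, hY, hYS⟩
      · exact .inl ⟨X ∪ Y, ⟨X, hX, Y, hY, rfl⟩, Set.union_subset hXS hYS⟩
      · exact .inr ⟨Y, .inr hY, hYS⟩
    · exact .inr ⟨X, .inl hX, hXS⟩
  | and A B ihA ihB =>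
    rcases ihA with ⟨X, hX, hXS⟩ | ⟨X, hX, hXS⟩
    · exact .inl ⟨X, .inl hX, hXS⟩
    · rcases ihB with ⟨Y, hY, hYS⟩ | ⟨Y, hY, hYS⟩
      · exact .inl ⟨Y, .inr hY, hYS⟩
      · exact .inr ⟨X ∪ Y, ⟨X, hX, Y, hY, rfl⟩, Set.union_subset hXS hYS⟩

/-! ## Total graphs -/

/-- `G` is a well-formed bl-graph that is total for `Γ`: it has the names of `Γ` as vertices, its
labels are exactly the branches of `Γ`, every edge is contained in its labels, and edges link names
of dual atoms. For sharing-free `Γ` and a fixpoint-free involution `bar` this is `G.IsBL` together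
with `Total bar G Γ`; requiring the dual atoms to exist, rather than comparing all atoms found at
the two ends, makes the last condition monotone in `Γ`. -/
structure IsTotal (bar : α → α) (G : BLGraph) (Γ : Finset (NForm α)) : Prop where
  verts_eq : G.verts = snames Γ
  br_eq : G.Br = BrS Γ
  edge_subset {e : Sym2 ℕ} {X : Set ℕ} : G.rel e X → ∀ x ∈ e, x ∈ X
  edge_dual {e : Sym2 ℕ} {X : Set ℕ} : G.rel e X →
    ∃ x y a, e = s(x, y) ∧ HasAtomS Γ x a ∧ HasAtomS Γ y (bar a)

namespace IsTotal

theorem mem_BrS {e : Sym2 ℕ} (hG : IsTotal bar G Γ) (h : G.rel e X) : X ∈ BrS Γ :=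
  hG.br_eq ▸ ⟨e, h⟩

theorem exists_rel (hG : IsTotal bar G Γ) (h : X ∈ BrS Γ) : ∃ e, G.rel e X := by
  rwa [← hG.br_eq] at h

theorem edge_subset_verts {e : Sym2 ℕ} (hG : IsTotal bar G Γ) (h : G.rel e X) :
    ∀ x ∈ e, x ∈ snames Γ :=
  fun x hx => (hG.mem_BrS h).1 (hG.edge_subset h x hx)

theorem union (hG : IsTotal bar G Γ) (hH : IsTotal bar H Δ)
    (hatom : ∀ x a, HasAtomS Θ x a ↔ HasAtomS Γ x a ∨ HasAtomS Δ x a)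
    (hbr : BrS Θ = BrS Γ ∪ BrS Δ) : IsTotal bar (G.union H) Θ where
  verts_eq := by
    ext x
    simp [BLGraph.union, hG.verts_eq, hH.verts_eq, mem_snames, hatom, exists_or]
  br_eq := by
    rw [hbr, ← hG.br_eq, ← hH.br_eq]
    ext X
    exact exists_or
  edge_subset h := h.elim hG.edge_subset hH.edge_subset
  edge_dual := by
    rintro e X (h | h)
    · obtain ⟨x, y, a, he, hx, hy⟩ := hG.edge_dual h
      exact ⟨x, y, a, he, (hatom x a).2 (.inl hx), (hatom y _).2 (.inl hy)⟩
    · obtain ⟨x, y, a, he, hx, hy⟩ := hH.edge_dual h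
      exact ⟨x, y, a, he, (hatom x a).2 (.inr hx), (hatom y _).2 (.inr hy)⟩

theorem blwk (hG : IsTotal bar G Γ) (hd : Disjoint (snames Γ) (snames Δ)) :
    IsTotal bar (blwk (snames Δ) (BrS Δ) G) (Γ ∪ Δ) where
  verts_eq := by rw [snames_union, ← hG.verts_eq]; rfl
  br_eq := by
    rw [BrS_union hd, ← hG.br_eq]
    ext X
    constructor
    · rintro ⟨e, Y, Z, hY, hZ, rfl⟩
      exact ⟨Y, ⟨e, hY⟩, Z, hZ, rfl⟩
    · rintro ⟨Y, ⟨e, hY⟩, Z, hZ, rfl⟩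
      exact ⟨e, Y, Z, hY, hZ, rfl⟩
  edge_subset := by
    rintro e _ ⟨Y, Z, hY, -, rfl⟩ x hx
    exact .inl (hG.edge_subset hY x hx)
  edge_dual := by
    rintro e _ ⟨Y, Z, hY, -, rfl⟩
    obtain ⟨x, y, a, he, hx, hy⟩ := hG.edge_dual hY
    exact ⟨x, y, a, he, hasAtomS_union.2 (.inl hx), hasAtomS_union.2 (.inl hy)⟩

theorem andI (hG : IsTotal bar G (insert A Γ)) (hH : IsTotal bar H (insert B Γ))
    (hA : Disjoint A.names (snames Γ)) (hB : Disjoint B.names (snames Γ)) :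
    IsTotal bar (G.union H) (insert (A.and B) Γ) :=
  hG.union hH (fun x a => by simp only [hasAtomS_insert, HasAtom]; tauto) (BrS_insert_and hA hB)

end IsTotal

theorem isTotal_insert_or (hAB : Disjoint A.names B.names) (hA : Disjoint A.names (snames Γ))
    (hB : Disjoint B.names (snames Γ)) :
    IsTotal bar G (insert (A.or B) Γ) ↔ IsTotal bar G (insert A (insert B Γ)) := by
  have hatom : ∀ x a, HasAtomS (insert (A.or B) Γ) x a ↔ HasAtomS (insert A (insert B Γ)) x a :=
    fun x a => by simp only [hasAtomS_insert, HasAtom, or_assoc]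
  have hnames : snames (insert (A.or B) Γ) = snames (insert A (insert B Γ)) := by
    simp [snames_insert, NForm.names, Set.union_assoc]
  have hbr := BrS_insert_or hAB hA hB
  constructor <;> rintro ⟨hv, hb, hs, hl⟩
  · exact ⟨hv.trans hnames, hb.trans hbr, hs, fun h => by simpa only [hatom] using hl h⟩
  · exact ⟨hv.trans hnames.symm, hb.trans hbr.symm, hs, fun h => by simpa only [hatom] using hl h⟩

theorem isTotal_blid_atom (h : x ≠ y) :
    IsTotal bar (blid (.atom x (bar a)) (.atom y a)) {.atom x (bar a), .atom y a} where
  verts_eq := by rw [snames_insert, snames_singleton]; rfl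
  br_eq := by
    rw [BrS_pair (A := .atom x _) (B := .atom y _) (Set.disjoint_singleton.2 h), BrF, BrF,
      Set.singleton_sups_singleton]
    ext X
    exact exists_eq_left
  edge_subset := by rintro e X ⟨rfl, rfl⟩; simp
  edge_dual := by
    rintro e X ⟨rfl, rfl⟩
    exact ⟨y, x, a, Sym2.eq_swap, by simp [HasAtomS, HasAtom], by simp [HasAtomS, HasAtom]⟩

theorem blid_comm (A C : NForm α) : blid A C = blid C A := by
  induction A generalizing C with
  | atom x a => cases C <;> simp [blid, Set.pair_comm, Sym2.eq_swap]
  | or A B ihA ihB | and A B ihA ihB => cases C <;> simp [blid, ihA, ihB]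

/-- The identity of a compound formula is the graph of its η-expansion, which ends with a
`∨`-rule below a `∧`-rule. -/
theorem IsTotal.blid_or_and (hAC : IsTotal bar (blid A C) {A, C})
    (hBD : IsTotal bar (blid B D) {B, D})
    (hd : Disjoint (A.or B).names (C.and D).names) (hAB : Disjoint A.names B.names) :
    IsTotal bar (blid (A.or B) (C.and D)) {A.or B, C.and D} := by
  have hd' := hd
  simp only [NForm.names, Set.disjoint_union_left, Set.disjoint_union_right] at hd'
  obtain ⟨⟨hAC', hBC⟩, hAD, hBD'⟩ := hd'
  have hACB : Disjoint (snames {A, C}) (snames {B}) := by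
    simpa [snames_insert, snames_singleton] using ⟨hAB, hBC.symm⟩
  have hBDA : Disjoint (snames {B, D}) (snames {A}) := by
    simpa [snames_insert, snames_singleton] using ⟨hAB.symm, hAD.symm⟩
  have hG := hAC.blwk hACB
  have hH := hBD.blwk hBDA
  rw [snames_singleton, BrS_singleton] at hG hH
  refine hG.union hH (fun x a => ?_) ?_
  · simp only [hasAtomS_union, hasAtomS_insert, hasAtomS_singleton, HasAtom]
    tauto
  · rw [BrS_pair hd, BrF_or, BrF, Set.sups_union_right, BrS_union hACB, BrS_union hBDA,
      BrS_pair hAC', BrS_pair hBD', BrS_singleton, BrS_singleton, Set.sups_right_comm,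
      Set.sups_right_comm (BrF B), Set.sups_comm (BrF B) (BrF A)]

theorem isTotal_blid_comm :
    IsTotal bar (blid A C) {A, C} ↔ IsTotal bar (blid C A) {C, A} := by
  rw [blid_comm, Finset.pair_comm]

theorem isTotal_blid (h : A.shape = (negF bar C).shape) (hA : A.sharingFree)
    (hC : C.sharingFree) (hd : Disjoint A.names C.names) : IsTotal bar (blid A C) {A, C} := by
  induction A generalizing C with
  | atom x a =>
    cases C with
    | or | and => simp [negF, NForm.shape] at h
    | atom y c =>
      obtain rfl : a = bar c := by simpa [negF, NForm.shape] using h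
      exact isTotal_blid_atom (Set.disjoint_singleton.1 hd)
  | or A B ihA ihB =>
    cases C with
    | atom | or => simp [negF, NForm.shape] at h
    | and C D =>
      obtain ⟨hAC, hBD⟩ : A.shape = (negF bar C).shape ∧ B.shape = (negF bar D).shape := by
        simpa [negF, NForm.shape] using h
      have hG := ihA hAC hA.1 hC.1 (hd.mono Set.subset_union_left Set.subset_union_left)
      have hH := ihB hBD hA.2.1 hC.2.1 (hd.mono Set.subset_union_right Set.subset_union_right)
      exact hG.blid_or_and hH hd hA.2.2
  | and A B ihA ihB =>
    cases C with
    | atom | and => simp [negF, NForm.shape] at h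
    | or C D =>
      obtain ⟨hAC, hBD⟩ : A.shape = (negF bar C).shape ∧ B.shape = (negF bar D).shape := by
        simpa [negF, NForm.shape] using h
      have hG := ihA hAC hA.1 hC.1 (hd.mono Set.subset_union_left Set.subset_union_left)
      have hH := ihB hBD hA.2.1 hC.2.1 (hd.mono Set.subset_union_right Set.subset_union_right)
      rw [isTotal_blid_comm] at hG hH ⊢
      exact hG.blid_or_and hH hd.symm hC.2.2

/-! ## Alternating walks -/

section AltWalk

variable {V : Type*} {E : Bool → Sym2 V → Prop} {I : Set V} {p : Bool → V → α} {b c : Bool}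
  {x y z w : V}

/-- Walks from `x` through the interface `I` whose edges have alternating colours, where `E c` is
the set of edges of colour `c`: `AltWalk E I x c y` says that some such walk ends at `y` with an
edge of colour `c`. Unlike on the paths of `AltPath`, vertices may be repeated. -/
inductive AltWalk (E : Bool → Sym2 V → Prop) (I : Set V) (x : V) : Bool → V → Prop
  | edge {c : Bool} {y : V} : E c s(x, y) → AltWalk E I x c y
  | step {c : Bool} {y z : V} : AltWalk E I x c y → y ∈ I → E (!c) s(y, z) → AltWalk E I x (!c) z

/-- A labelling of the vertices by atoms, one for each colour, such that edges link dual atoms, and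
such that the two labels of a vertex are dual in the interface `I` and equal outside it. -/
structure DualLabelling (bar : α → α) (E : Bool → Sym2 V → Prop) (I : Set V)
    (p : Bool → V → α) : Prop where
  edge {c : Bool} {x y : V} : E c s(x, y) → p c x = bar (p c y)
  not_eq {c : Bool} {x : V} : x ∉ I → p (!c) x = p c x
  not_eq_bar {c : Bool} {x : V} : x ∈ I → p (!c) x = bar (p c x)

namespace AltWalk

theorem exists_first_edge (h : AltWalk E I x c y) : ∃ b z, E b s(x, z) := by
  induction h with
  | edge h => exact ⟨_, _, h⟩
  | step _ _ _ ih => exact ih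

theorem exists_last_edge (h : AltWalk E I x c y) : ∃ z, E c s(z, y) := by
  cases h with
  | edge h | step _ _ h => exact ⟨_, h⟩

theorem trans_reverse (hy : AltWalk E I y b z) (hx : AltWalk E I x (!b) z) (hz : z ∈ I) :
    ∃ c, AltWalk E I x c y := by
  induction hy with
  | edge h => exact ⟨_, hx.step hz (by rwa [Bool.not_not, Sym2.eq_swap])⟩
  | @step b w z _ hw h ih =>
    have hxw : AltWalk E I x (!!!b) w := hx.step hz (by rwa [Bool.not_not, Sym2.eq_swap])
    exact ih (by rwa [Bool.not_not] at hxw) hw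

variable (hp : DualLabelling bar E I p) (hbar : Function.Involutive bar) (hx : x ∉ I)
include hp hbar hx

/-- Crossing the interface flips the label twice, so it is the colour of the last edge, rather than
the length of the walk, that determines the label at its end. -/
theorem label_eq (h : AltWalk E I x b y) : p b y = bar (p c x) := by
  have hpx : ∀ b, p b x = p c x := fun b => by
    rcases Bool.eq_or_eq_not b c with rfl | rfl
    exacts [rfl, hp.not_eq hx]
  induction h with
  | @edge b y h => rw [← hpx b, hp.edge h, hbar]
  | @step b y z _ hy h ih => rw [← ih, ← hbar (p b y), ← hp.not_eq_bar hy, hp.edge h, hbar]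

theorem ne (hfix : ∀ a, bar a ≠ a) (h : AltWalk E I x b y) : x ≠ y := by
  rintro rfl
  exact hfix _ (h.label_eq (c := b) hp hbar hx).symm

theorem colour_unique (hfix : ∀ a, bar a ≠ a) (hy : y ∈ I) (hb : AltWalk E I x b y)
    (hc : AltWalk E I x c y) : b = c := by
  by_contra hne
  obtain rfl : c = !b := (Bool.eq_or_eq_not c b).resolve_left (Ne.symm hne)
  apply hfix (p b y)
  rw [← hp.not_eq_bar hy, hc.label_eq (c := b) hp hbar hx, hb.label_eq (c := b) hp hbar hx]

end AltWalk

/-- `z` ends an alternating walk that starts outside the interface and whose last edge has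
colour `c`. For `z ∉ I` such a walk is complete. -/
def Reached (E : Bool → Sym2 V → Prop) (I : Set V) (c : Bool) (z : V) : Prop :=
  ∃ x ∉ I, AltWalk E I x c z

theorem Reached.of_edge (hy : y ∉ I) (h : E c s(y, z)) : Reached E I c z :=
  ⟨y, hy, .edge h⟩

theorem Reached.step (hy : y ∈ I) (hR : Reached E I (!c) y) (h : E c s(y, z)) :
    Reached E I c z := by
  obtain ⟨x, hx, hxy⟩ := hR
  exact ⟨x, hx, by simpa using hxy.step hy (by simpa using h)⟩

theorem Reached.exists_complete (hz : z ∈ I) (hR : Reached E I c z) (hR' : Reached E I (!c) z) :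
    ∃ b, ∃ y ∉ I, Reached E I b y := by
  obtain ⟨y, hy, hyz⟩ := hR
  obtain ⟨x, hx, hxz⟩ := hR'
  obtain ⟨b, hxy⟩ := hyz.trans_reverse hxz hz
  exact ⟨b, y, hy, x, hx, hxy⟩

/-- A set of vertices that forces complete walks: if no edge of colour `c` has `t c` at both ends,
then an edge of colour `c` all of whose ends in the interface lie in `turnSet E I t c` gives rise to
a complete alternating walk. -/
def turnSet (E : Bool → Sym2 V → Prop) (I : Set V) (t : Bool → V → Prop) (c : Bool) : Set V :=
  {z | Reached E I (!c) z ∨ ¬ Reached E I c z ∧ t c z}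

variable {t : Bool → V → Prop}

theorem mem_turnSet_not (ht : t (!c) z ↔ ¬ t c z) (hz : z ∉ turnSet E I t c) :
    z ∈ turnSet E I t (!c) := by
  simp only [turnSet, Set.mem_ofPred_eq, Bool.not_not, ht] at hz ⊢
  tauto

theorem Reached.exists_complete_of_mem_turnSet (hR : Reached E I c z)
    (hz : z ∈ I → z ∈ turnSet E I t c) : ∃ b, ∃ y ∉ I, Reached E I b y := by
  by_cases hzI : z ∈ I
  · exact hR.exists_complete hzI ((hz hzI).resolve_right fun h => h.1 hR)
  · exact ⟨c, z, hzI, hR⟩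

theorem exists_complete_of_edge {e : Sym2 V} (ht : ∀ y z, E c s(y, z) → t c y → ¬ t c z)
    (he : E c e) (h : ∀ z ∈ e, z ∈ I → z ∈ turnSet E I t c) : ∃ b, ∃ y ∉ I, Reached E I b y := by
  induction e with | _ y z
  have he' : E c s(z, y) := Sym2.eq_swap ▸ he
  have hy := h y (Sym2.mem_mk_left y z)
  have hz := h z (Sym2.mem_mk_right y z)
  by_cases hyI : y ∈ I
  · rcases hy hyI with hyR | ⟨hyR, hyt⟩
    · exact (hyR.step hyI he).exists_complete_of_mem_turnSet hz
    · have hzI : z ∈ I := by_contra fun hzI => hyR (.of_edge hzI he')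
      rcases hz hzI with hzR | ⟨-, hzt⟩
      · exact (hyR (hzR.step hzI he')).elim
      · exact (ht y z he hyt hzt).elim
  · exact (Reached.of_edge hyI he).exists_complete_of_mem_turnSet hz

end AltWalk

theorem exists_valuation (hbar : Function.Involutive bar) (hfix : ∀ a, bar a ≠ a) :
    ∃ v : α → Prop, ∀ a, v (bar a) ↔ ¬ v a := by
  refine ⟨fun a => WellOrderingRel a (bar a), fun a => ?_⟩
  simp only [hbar a]
  exact ⟨asymm_of _, fun h =>
    ((trichotomous_of WellOrderingRel _ _).resolve_left h).resolve_left (hfix a).symm⟩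

theorem exists_complete_altWalk (hbar : Function.Involutive bar) (hfix : ∀ a, bar a ≠ a)
    {E : Bool → Sym2 ℕ → Prop} {p : Bool → ℕ → α} (hp : DualLabelling bar E A.names p)
    (hE : ∀ c, ∀ Y ∈ BrF (cond c A (negF bar A)),
      ∃ e, E c e ∧ ∀ z ∈ e, z ∈ A.names → z ∈ Y) :
    ∃ x y b, x ∉ A.names ∧ y ∉ A.names ∧ AltWalk E A.names x b y := by
  obtain ⟨v, hv⟩ := exists_valuation hbar hfix
  let t (c : Bool) (z : ℕ) : Prop := v (p c z)
  have ht : ∀ c y z, E c s(y, z) → t c y → ¬ t c z := fun c y z h => by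
    simp only [t, hp.edge h, hv, imp_self]
  let T := turnSet E A.names t
  have hT : ∀ z ∈ A.names, z ∈ (T true)ᶜ → z ∈ T false := fun z hz =>
    mem_turnSet_not (by simp only [t, hp.not_eq_bar hz, hv])
  suffices h : ∃ c e, E c e ∧ ∀ z ∈ e, z ∈ A.names → z ∈ T c by
    obtain ⟨c, e, he, hTe⟩ := h
    obtain ⟨b, y, hy, x, hx, hxy⟩ := exists_complete_of_edge (ht c) he hTe
    exact ⟨x, y, b, hx, hy, hxy⟩
  rcases exists_branch_subset_or_compl bar A (T true) with ⟨Y, hY, hYT⟩ | ⟨Y, hY, hYT⟩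
  · obtain ⟨e, he, heY⟩ := hE true Y hY
    exact ⟨true, e, he, fun z hz hzA => hYT (heY z hz hzA)⟩
  · obtain ⟨e, he, heY⟩ := hE false Y hY
    exact ⟨false, e, he, fun z hz hzA => hT z hzA (hYT (heY z hz hzA))⟩

/-! ## Alternating paths -/

section AltPath

variable {V : Type*} {E : Bool → Sym2 V → Prop} {I : Set V} {p : Bool → V → α} {b c : Bool}
  {x y w : V} {z : ℕ → V} {n m : ℕ}

/-- The colour of the `i`-th edge of a path that starts with colour `b`. -/
def altColour (b : Bool) (i : ℕ) : Bool :=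
  if Even i then b else !b

theorem altColour_succ (b : Bool) (i : ℕ) : altColour b (i + 1) = !altColour b i := by
  by_cases h : Even i <;> simp [altColour, h, Nat.even_add_one]

/-- `z 0, …, z n` is an alternating path through `I` whose first edge has colour `b`. Here `n`
counts the edges, whereas in `AltPath` it counts the vertices. -/
structure IsAltPath (E : Bool → Sym2 V → Prop) (I : Set V) (b : Bool) (n : ℕ) (z : ℕ → V) :
    Prop where
  injOn : Set.InjOn z (Set.Iic n)
  mem_interface (i : ℕ) : 0 < i → i < n → z i ∈ I
  edge (i : ℕ) : i < n → E (altColour b i) s(z i, z (i + 1))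

namespace IsAltPath

theorem altWalk (h : IsAltPath E I b n z) (hm : m < n) :
    AltWalk E I (z 0) (altColour b m) (z (m + 1)) := by
  induction m with
  | zero => exact .edge (h.edge 0 hm)
  | succ m ih =>
    have he := h.edge (m + 1) hm
    rw [altColour_succ] at he ⊢
    exact (ih (Nat.lt_of_succ_lt hm)).step (h.mem_interface (m + 1) m.succ_pos hm) he

theorem take (h : IsAltPath E I b n z) (hm : m ≤ n) : IsAltPath E I b m z where
  injOn := h.injOn.mono (Set.Iic_subset_Iic.2 hm)
  mem_interface i hi him := h.mem_interface i hi (him.trans_le hm)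
  edge i hi := h.edge i (hi.trans_le hm)

theorem of_edge (he : E c s(x, y)) (hxy : x ≠ y) :
    IsAltPath E I c 1 (fun i => if i = 0 then x else y) where
  injOn i hi j hj hij := by
    simp only [Set.mem_Iic, Nat.le_one_iff_eq_zero_or_eq_one] at hi hj
    rcases hi with rfl | rfl <;> rcases hj with rfl | rfl <;> simp_all
  mem_interface i hi hi' := by lia
  edge i hi := by simpa [Nat.lt_one_iff.1 hi, altColour] using he

theorem snoc (h : IsAltPath E I b n z) (hw : ∀ i ≤ n, z i ≠ w) (hn : 0 < n → z n ∈ I)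
    (he : E (altColour b n) s(z n, w)) :
    IsAltPath E I b (n + 1) (fun i => if i ≤ n then z i else w) where
  injOn i hi j hj hij := by
    simp only [Set.mem_Iic] at hi hj
    dsimp only at hij
    split_ifs at hij with hin hjn hjn
    · exact h.injOn hin hjn hij
    · exact (hw i hin hij).elim
    · exact (hw j hjn hij.symm).elim
    · lia
  mem_interface i hi hin := by
    rw [if_pos (Nat.le_of_lt_succ hin)]
    rcases (Nat.le_of_lt_succ hin).lt_or_eq with hin | rfl
    · exact h.mem_interface i hi hin
    · exact hn hi
  edge i hi := by
    rcases (Nat.le_of_lt_succ hi).lt_or_eq with hin | rfl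
    · simpa [hin.le, Nat.succ_le_of_lt hin] using h.edge i hin
    · simpa using he

end IsAltPath

/-- A walk that returns to a vertex can be cut short there: by `AltWalk.colour_unique` the shorter
walk ends with the same colour. -/
theorem AltWalk.exists_isAltPath (hp : DualLabelling bar E I p)
    (hbar : Function.Involutive bar) (hfix : ∀ a, bar a ≠ a) (hx : x ∉ I)
    (h : AltWalk E I x c y) :
    ∃ n b z, IsAltPath E I b (n + 1) z ∧ z 0 = x ∧ z (n + 1) = y ∧ altColour b n = c := by
  induction h with
  | @edge c y h =>
    exact ⟨0, c, _, .of_edge h ((AltWalk.edge h).ne hp hbar hx hfix), rfl, rfl, rfl⟩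
  | @step c y w hxy hy he ih =>
    obtain ⟨n, b, z, hz, rfl, rfl, rfl⟩ := ih
    have hxw := hxy.step hy he
    rw [← altColour_succ] at he hxw ⊢
    by_cases hw : ∀ i ≤ n + 1, z i ≠ w
    · exact ⟨n + 1, b, _, hz.snoc hw (fun _ => hy) he, by simp, by simp, rfl⟩
    push Not at hw
    obtain ⟨i, hi, rfl⟩ := hw
    have hi0 : i ≠ 0 := by
      rintro rfl
      exact hxw.ne hp hbar hx hfix rfl
    obtain ⟨m, rfl⟩ := Nat.exists_eq_succ_of_ne_zero hi0
    have hmI : z (m + 1) ∈ I := by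
      rcases hi.lt_or_eq with hi | hi
      exacts [hz.mem_interface _ m.succ_pos hi, by rwa [← hi] at hy]
    exact ⟨m, b, z, hz.take hi, rfl, rfl,
      (hz.altWalk hi).colour_unique hp hbar hx hfix hmI hxw⟩

end AltPath

/-- The edges that can appear in an `X`-labeled alternating path between `G` (colour `true`) and
`H` (colour `false`) through `I`. -/
def interfaceEdge (G H : BLGraph) (I X : Set ℕ) (c : Bool) (e : Sym2 ℕ) : Prop :=
  (cond c G H).relI I e X

theorem altPath_iff {I : Set ℕ} {n : ℕ} {z : ℕ → ℕ} :
    AltPath G H I X (n + 2) z ↔ ∃ b, IsAltPath (interfaceEdge G H I X) I b (n + 1) z := by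
  have hcol : ∀ b i e, interfaceEdge G H I X (altColour b i) e ↔
      (Even i → interfaceEdge G H I X b e) ∧ (¬ Even i → interfaceEdge G H I X (!b) e) :=
    fun b i e => by by_cases h : Even i <;> simp [altColour, h]
  constructor
  · rintro ⟨-, hinj, hI, hE⟩
    have hinj' : Set.InjOn z (Set.Iic (n + 1)) := fun i hi j hj =>
      hinj i (Nat.lt_succ_of_le hi) j (Nat.lt_succ_of_le hj)
    have hI' : ∀ i, 0 < i → i < n + 1 → z i ∈ I := fun i hi hin => hI i hi (Nat.succ_lt_succ hin)
    rcases hE with hE | hE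
    · exact ⟨true, hinj', hI', fun i hi => (hcol ..).2 (hE i (Nat.succ_lt_succ hi))⟩
    · exact ⟨false, hinj', hI', fun i hi => (hcol ..).2 (hE i (Nat.succ_lt_succ hi))⟩
  · rintro ⟨b, hinj, hI, hE⟩
    refine ⟨by lia, fun i hi j hj => hinj (Nat.le_of_lt_succ hi) (Nat.le_of_lt_succ hj),
      fun i hi hin => hI i hi (Nat.lt_of_succ_lt_succ hin), ?_⟩
    have hE' := fun i hi => (hcol ..).1 (hE i (Nat.lt_of_succ_lt_succ hi))
    cases b
    exacts [.inr hE', .inl hE']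

theorem rel_comp_iff {I : Set ℕ} {p : Bool → ℕ → α} {e : Sym2 ℕ}
    (hp : DualLabelling bar (interfaceEdge G H I X) I p) (hbar : Function.Involutive bar)
    (hfix : ∀ a, bar a ≠ a) :
    (G.comp H I).rel e X ↔ ∃ x y b, e = s(x, y) ∧ x ∉ I ∧ y ∉ I ∧
      AltWalk (interfaceEdge G H I X) I x b y := by
  constructor
  · rintro ⟨n, z, hz, hx, hy, rfl⟩
    obtain ⟨n, rfl⟩ := Nat.exists_eq_add_of_le' hz.1
    obtain ⟨b, hz⟩ := altPath_iff.1 hz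
    exact ⟨_, _, _, rfl, hx, hy, hz.altWalk n.lt_succ_self⟩
  · rintro ⟨x, y, c, rfl, hx, hy, h⟩
    obtain ⟨n, b, z, hz, rfl, rfl, -⟩ := h.exists_isAltPath hp hbar hfix hx
    exact ⟨n + 2, z, altPath_iff.2 ⟨b, hz⟩, hx, hy, rfl⟩

/-! ## Composition of total graphs -/

namespace IsLabelling

variable {p : ℕ → α}

theorem edge_eq_bar (hp : IsLabelling p Γ) (hG : IsTotal bar G Γ)
    (hbar : Function.Involutive bar) (h : G.rel s(x, y) X) : p x = bar (p y) := by
  obtain ⟨x', y', a, he, hx, hy⟩ := hG.edge_dual h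
  rcases Sym2.eq_iff.1 he with ⟨rfl, rfl⟩ | ⟨rfl, rfl⟩
  · rw [hp _ _ hx, hp _ _ hy, hbar]
  · rw [hp _ _ hx, hp _ _ hy]

theorem hasAtomS (hp : IsLabelling p Γ) (hx : x ∈ snames Γ) : HasAtomS Γ x (p x) := by
  obtain ⟨a, ha⟩ := mem_snames.1 hx
  rwa [hp x a ha]

theorem mono (hp : IsLabelling p Δ) (h : Γ ⊆ Δ) : IsLabelling p Γ :=
  fun x a ⟨A, hA, ha⟩ => hp x a ⟨A, h hA, ha⟩

end IsLabelling

/-- The label of a name in `A, Γ` (colour `true`) or in `Ā, Γ` (colour `false`), where `p` labels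
the names in `A, Γ`. -/
def dualize (bar : α → α) (A : NForm α) (p : ℕ → α) (c : Bool) (x : ℕ) : α :=
  if c = false ∧ x ∈ A.names then bar (p x) else p x

theorem IsLabelling.dualize {p : ℕ → α} (hp : IsLabelling p (insert A Γ))
    (hbar : Function.Involutive bar) (hd : Disjoint A.names (snames Γ)) (c : Bool) :
    IsLabelling (dualize bar A p c) (insert (cond c A (negF bar A)) Γ) := by
  cases c
  · rintro x a h
    rcases hasAtomS_insert.1 h with h | h
    · have hA : HasAtom A x (bar a) := (hasAtom_negF hbar).1 h
      have hx : x ∈ A.names := NForm.mem_names.2 ⟨_, hA⟩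
      rw [GS4.dualize, if_pos ⟨rfl, hx⟩, hp x _ (hasAtomS_insert.2 (.inl hA)), hbar]
    · have hx : x ∉ A.names := Set.disjoint_right.1 hd (mem_snames.2 ⟨a, h⟩)
      rw [GS4.dualize, if_neg fun h => hx h.2, hp x a (hasAtomS_insert.2 (.inr h))]
  · exact hp

theorem names_cond_negF (bar : α → α) (A : NForm α) (c : Bool) :
    (cond c A (negF bar A)).names = A.names := by
  cases c
  exacts [names_negF bar A, rfl]

theorem union_sdiff_names {Y : Set ℕ} (hd : Disjoint A.names (snames Γ)) (hY : Y ∈ BrF A)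
    (hX : X ∈ BrS Γ) : (Y ∪ X) \ A.names = X := by
  rw [Set.union_sdiff_distrib, Set.sdiff_eq_empty.2 (subset_names_of_mem_BrF hY), Set.empty_union,
    (hd.symm.mono_left hX.1).sdiff_eq_left]

section Composition

variable {c : Bool} {e : Sym2 ℕ}
  (hK : ∀ c, IsTotal bar (cond c G H) (insert (cond c A (negF bar A)) Γ))
  (hd : Disjoint A.names (snames Γ))
include hK

theorem mem_of_interfaceEdge (h : interfaceEdge G H A.names X c e) (hx : x ∈ e)
    (hxA : x ∉ A.names) : x ∈ X := by
  obtain ⟨Y, hY, rfl⟩ := h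
  exact ⟨(hK c).edge_subset hY x hx, hxA⟩

include hd

theorem dualLabelling_dualize {p : ℕ → α} (hp : IsLabelling p (insert A Γ))
    (hbar : Function.Involutive bar) :
    DualLabelling bar (interfaceEdge G H A.names X) A.names (dualize bar A p) where
  edge := by
    rintro c x y ⟨Y, hY, -⟩
    exact (hp.dualize hbar hd c).edge_eq_bar (hK c) hbar hY
  not_eq {c x} hx := by simp [dualize, hx]
  not_eq_bar {c x} hx := by cases c <;> simp [dualize, hx, hbar (p x)]

theorem mem_BrS_of_interfaceEdge (h : interfaceEdge G H A.names X c e) : X ∈ BrS Γ := by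
  obtain ⟨Y, hY, rfl⟩ := h
  rw [← names_cond_negF bar A c] at hd ⊢
  have hbr := (hK c).mem_BrS hY
  rw [BrS_insert hd] at hbr
  obtain ⟨Z, hZ, W, hW, rfl⟩ := hbr
  exact (union_sdiff_names hd hZ hW).symm ▸ hW

theorem exists_interfaceEdge {Y : Set ℕ} (hX : X ∈ BrS Γ) (hY : Y ∈ BrF (cond c A (negF bar A))) :
    ∃ e, interfaceEdge G H A.names X c e ∧ ∀ z ∈ e, z ∈ A.names → z ∈ Y := by
  rw [← names_cond_negF bar A c] at hd ⊢
  have hYX : Y ∪ X ∈ BrS (insert (cond c A (negF bar A)) Γ) :=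
    BrS_insert hd ▸ ⟨Y, hY, X, hX, rfl⟩
  obtain ⟨e, he⟩ := (hK c).exists_rel hYX
  refine ⟨e, ⟨Y ∪ X, he, (union_sdiff_names hd hY hX).symm⟩, fun z hz hzA => ?_⟩
  exact ((hK c).edge_subset he z hz).resolve_right fun hzX => Set.disjoint_left.1 hd hzA (hX.1 hzX)

theorem exists_ends_of_rel_comp {p : ℕ → α} (hp : IsLabelling p (insert A Γ))
    (hbar : Function.Involutive bar) (hfix : ∀ a, bar a ≠ a) (h : (G.comp H A.names).rel e X) :
    X ∈ BrS Γ ∧ ∃ x y, e = s(x, y) ∧ x ∈ X ∧ y ∈ X ∧ p y = bar (p x) := by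
  have hdual := dualLabelling_dualize (X := X) hK hd hp hbar
  obtain ⟨x, y, b, rfl, hx, hy, hxy⟩ := (rel_comp_iff hdual hbar hfix).1 h
  obtain ⟨_, _, hfirst⟩ := hxy.exists_first_edge
  obtain ⟨_, hlast⟩ := hxy.exists_last_edge
  have hlabel := hxy.label_eq (c := true) hdual hbar hx
  exact ⟨mem_BrS_of_interfaceEdge hK hd hlast, x, y, rfl,
    mem_of_interfaceEdge hK hfirst (Sym2.mem_mk_left ..) hx,
    mem_of_interfaceEdge hK hlast (Sym2.mem_mk_right ..) hy,
    by simpa [dualize, hx, hy] using hlabel⟩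

end Composition

theorem IsTotal.comp (hG : IsTotal bar G (insert A Γ)) (hH : IsTotal bar H (insert (negF bar A) Γ))
    (hΓ : SFSet (insert A Γ)) (hd : Disjoint A.names (snames Γ))
    (hbar : Function.Involutive bar) (hfix : ∀ a, bar a ≠ a) :
    IsTotal bar (G.comp H A.names) Γ := by
  have hK : ∀ c, IsTotal bar (cond c G H) (insert (cond c A (negF bar A)) Γ) := Bool.rec hH hG
  have : Nonempty α := by
    obtain ⟨x, hx⟩ := A.names_nonempty
    exact (NForm.mem_names.1 hx).nonempty
  obtain ⟨p, hp⟩ := hΓ.exists_isLabelling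
  have hpΓ := hp.mono (Finset.subset_insert A Γ)
  have hends {e X} := exists_ends_of_rel_comp (e := e) (X := X) hK hd hp hbar hfix
  refine ⟨?_, Set.Subset.antisymm (fun X ⟨e, h⟩ => (hends h).1) fun X hX => ?_,
    fun {e X} h => ?_, fun {e X} h => ?_⟩
  · rw [BLGraph.comp, hG.verts_eq, hH.verts_eq, snames_insert, snames_insert, names_negF,
      Set.union_self, Set.union_sdiff_left, hd.symm.sdiff_eq_left]
  · have hdual := dualLabelling_dualize (X := X) hK hd hp hbar
    obtain ⟨x, y, b, hx, hy, hxy⟩ := exists_complete_altWalk hbar hfix hdual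
      fun c Y hY => exists_interfaceEdge hK hd hX hY
    exact ⟨_, (rel_comp_iff hdual hbar hfix).2 ⟨x, y, b, rfl, hx, hy, hxy⟩⟩
  · obtain ⟨-, x, y, rfl, hx, hy, -⟩ := hends h
    simpa using ⟨hx, hy⟩
  · obtain ⟨hX, x, y, rfl, hx, hy, hpy⟩ := hends h
    exact ⟨x, y, p x, rfl, hpΓ.hasAtomS (hX.1 hx), hpy ▸ hpΓ.hasAtomS (hX.1 hy)⟩

/-! ## Graphs of derivations -/

theorem sfSet_insert_insert (hA : A ∉ insert B Γ) (hB : B ∉ Γ) :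
    SFSet (insert A (insert B Γ)) ↔ A.sharingFree ∧ B.sharingFree ∧ SFSet Γ ∧
      Disjoint A.names B.names ∧ Disjoint A.names (snames Γ) ∧ Disjoint B.names (snames Γ) := by
  rw [sfSet_insert hA, sfSet_insert hB, snames_insert, Set.disjoint_union_right]
  tauto

theorem sfSet_insert_or (h : A.or B ∉ Γ) :
    SFSet (insert (A.or B) Γ) ↔ A.sharingFree ∧ B.sharingFree ∧ SFSet Γ ∧
      Disjoint A.names B.names ∧ Disjoint A.names (snames Γ) ∧ Disjoint B.names (snames Γ) := by
  rw [sfSet_insert h, NForm.sharingFree, NForm.names, Set.disjoint_union_left]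
  tauto

theorem sfSet_insert_and (h : A.and B ∉ Γ) :
    SFSet (insert (A.and B) Γ) ↔ A.sharingFree ∧ B.sharingFree ∧ SFSet Γ ∧
      Disjoint A.names B.names ∧ Disjoint A.names (snames Γ) ∧ Disjoint B.names (snames Γ) := by
  rw [sfSet_insert h, NForm.sharingFree, NForm.names, Set.disjoint_union_left]
  tauto

theorem notMem_insert_of_disjoint_names (hAB : Disjoint A.names B.names)
    (hA : Disjoint A.names (snames Γ)) : A ∉ insert B Γ :=
  notMem_of_disjoint_snames (snames_insert B Γ ▸ hAB.union_right hA)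

theorem concl_cut {P Q : Deriv α} (hA : A ∉ Γ) (hP : concl P = insert A Γ) :
    concl (.cut A P Q) = Γ := by
  rw [concl, hP, Finset.erase_insert hA]

theorem concl_orI {P : Deriv α} (hA : A ∉ insert B Γ) (hB : B ∉ Γ)
    (hP : concl P = insert A (insert B Γ)) : concl (.orI A B P) = insert (A.or B) Γ := by
  rw [concl, hP, Finset.erase_insert hA, Finset.erase_insert hB]

theorem concl_andI {P Q : Deriv α} (hA : A ∉ Γ) (hP : concl P = insert A Γ) :
    concl (.andI A B P Q) = insert (A.and B) Γ := by
  rw [concl, hP, Finset.erase_insert hA]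

theorem sfSet_concl {P : Deriv α} (hP : WF bar P) : SFSet (concl P) := by
  induction P with
  | ax Γ A C =>
    obtain ⟨-, hA, hC, hΓ, hAC, hAΓ, hCΓ⟩ := hP
    exact (sfSet_insert_insert (notMem_insert_of_disjoint_names hAC hAΓ)
      (notMem_of_disjoint_snames hCΓ)).2 ⟨hA, hC, hΓ, hAC, hAΓ, hCΓ⟩
  | cut A P Q =>
    obtain ⟨-, -, Γ, hA, -, hP, -, -, hΓ, -⟩ := hP
    rwa [concl_cut hA hP]
  | sup P Q ihP _ => exact ihP hP.1
  | orI A B P =>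
    obtain ⟨-, Γ, -, hB, -, hP, h⟩ := hP
    obtain ⟨-, -, -, hAB, hAΓ, hBΓ⟩ := id h
    rw [concl_orI (notMem_insert_of_disjoint_names hAB hAΓ) hB hP]
    exact (sfSet_insert_or (notMem_of_disjoint_snames (hAΓ.union_left hBΓ))).2 h
  | andI A B P Q =>
    obtain ⟨-, -, Γ, hA, -, hP, -, h⟩ := hP
    obtain ⟨-, -, -, -, hAΓ, hBΓ⟩ := id h
    rw [concl_andI hA hP]
    exact (sfSet_insert_and (notMem_of_disjoint_snames (hAΓ.union_left hBΓ))).2 h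

theorem isTotal_blaxg (hbar : Function.Involutive bar) (hfix : ∀ a, bar a ≠ a) {P : Deriv α}
    (hP : WF bar P) : IsTotal bar (blaxg P) (concl P) := by
  induction P with
  | ax Γ A C =>
    obtain ⟨h, hA, hC, -, hAC, hAΓ, hCΓ⟩ := hP
    have hΓ : concl (.ax Γ A C) = {A, C} ∪ Γ := by
      rw [concl, Finset.insert_union, Finset.singleton_union]
    rw [hΓ]
    refine (isTotal_blid h hA hC hAC).blwk ?_
    rw [snames_insert, snames_singleton]
    exact hAΓ.union_left hCΓ
  | cut A P Q ihP ihQ =>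
    obtain ⟨hP, hQ, Γ, hA, -, hcP, hcQ, hsA, hΓ, hd⟩ := hP
    rw [concl_cut hA hcP]
    exact (hcP ▸ ihP hP).comp (hcQ ▸ ihQ hQ) ((sfSet_insert hA).2 ⟨hsA, hd, hΓ⟩) hd hbar hfix
  | sup P Q ihP ihQ =>
    obtain ⟨hP, hQ, hc⟩ := hP
    exact (ihP hP).union (hc ▸ ihQ hQ) (fun _ _ => or_self_iff.symm) (Set.union_self _).symm
  | orI A B P ih =>
    obtain ⟨hP, Γ, -, hB, -, hc, -, -, -, hAB, hAΓ, hBΓ⟩ := hP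
    rw [concl_orI (notMem_insert_of_disjoint_names hAB hAΓ) hB hc]
    exact (isTotal_insert_or hAB hAΓ hBΓ).2 (hc ▸ ih hP)
  | andI A B P Q ihP ihQ =>
    obtain ⟨hP, hQ, Γ, hA, -, hcP, hcQ, -, -, -, -, hAΓ, hBΓ⟩ := hP
    rw [concl_andI hA hcP]
    exact (hcP ▸ ihP hP).andI (hcQ ▸ ihQ hQ) hAΓ hBΓ

/-! ## Realising total graphs -/

theorem not_subset_snames_of_mem_BrS_insert (hX : X ∈ BrS (insert A Γ))
    (h : Disjoint A.names (snames Δ)) : ¬ X ⊆ snames Δ := fun hXΔ => by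
  obtain ⟨x, hxX, hxA⟩ := nonempty_of_mem_BrF (hX.2 A (Finset.mem_insert_self A Γ))
  exact Set.disjoint_left.1 h hxA (hXΔ hxX)

theorem IsTotal.restrict (hG : IsTotal bar G Γ) (hnames : snames Δ ⊆ snames Γ)
    (hbr : ∀ X ⊆ snames Δ, X ∈ BrS Γ ↔ X ∈ BrS Δ)
    (hatom : ∀ x ∈ snames Δ, ∀ a, HasAtomS Γ x a → HasAtomS Δ x a) :
    IsTotal bar (G.restrict (snames Δ)) Δ where
  verts_eq := by rw [BLGraph.restrict, hG.verts_eq, Set.inter_eq_right.2 hnames]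
  br_eq := by
    ext X
    constructor
    · rintro ⟨e, he, hX⟩
      exact (hbr X hX).1 (hG.mem_BrS he)
    · intro hX
      obtain ⟨e, he⟩ := hG.exists_rel ((hbr X hX.1).2 hX)
      exact ⟨e, he, hX.1⟩
  edge_subset h := hG.edge_subset h.1
  edge_dual {e X} h := by
    obtain ⟨he, hX⟩ := h
    obtain ⟨x, y, a, rfl, hx, hy⟩ := hG.edge_dual he
    have hmem : ∀ z ∈ s(x, y), z ∈ snames Δ := fun z hz => hX (hG.edge_subset he z hz)
    exact ⟨x, y, a, rfl, hatom x (hmem x (Sym2.mem_mk_left ..)) _ hx,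
      hatom y (hmem y (Sym2.mem_mk_right ..)) _ hy⟩

theorem IsTotal.exists_union_of_insert_and (hG : IsTotal bar G (insert (A.and B) Γ))
    (hAB : Disjoint A.names B.names) (hA : Disjoint A.names (snames Γ))
    (hB : Disjoint B.names (snames Γ)) :
    ∃ G₁ G₂, IsTotal bar G₁ (insert A Γ) ∧ IsTotal bar G₂ (insert B Γ) ∧ G = G₁.union G₂ := by
  have hBrS := BrS_insert_and hA hB
  have hAB' : Disjoint A.names (snames (insert B Γ)) := snames_insert B Γ ▸ hAB.union_right hA
  have hBA' : Disjoint B.names (snames (insert A Γ)) := snames_insert A Γ ▸ hAB.symm.union_right hB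
  have hnames : snames (insert (A.and B) Γ) = snames (insert A Γ) ∪ snames (insert B Γ) := by
    rw [snames_insert, snames_insert, snames_insert, NForm.names, Set.union_union_distrib_right]
  refine ⟨_, _, hG.restrict (hnames ▸ Set.subset_union_left) (fun X hX => ?_) ?_,
    hG.restrict (hnames ▸ Set.subset_union_right) (fun X hX => ?_) ?_, ?_⟩
  · rw [hBrS]
    exact or_iff_left fun h => not_subset_snames_of_mem_BrS_insert h hBA' hX
  · simp only [hasAtomS_insert, HasAtom]
    have hxB {x a} (hx : x ∈ snames (insert A Γ)) (h : HasAtom B x a) : False :=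
      Set.disjoint_left.1 hBA' (NForm.mem_names.2 ⟨a, h⟩) hx
    exact fun x hx a h => h.imp_left fun h => h.resolve_right (hxB hx)
  · rw [hBrS]
    exact or_iff_right fun h => not_subset_snames_of_mem_BrS_insert h hAB' hX
  · simp only [hasAtomS_insert, HasAtom]
    have hxA {x a} (hx : x ∈ snames (insert B Γ)) (h : HasAtom A x a) : False :=
      Set.disjoint_left.1 hAB' (NForm.mem_names.2 ⟨a, h⟩) hx
    exact fun x hx a h => h.imp_left fun h => h.resolve_left (hxA hx)
  · refine congrArg₂ BLGraph.mk ?_ (funext₂ fun e X => propext ⟨fun h => ?_, fun h => ?_⟩)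
    · rw [BLGraph.restrict, BLGraph.restrict, ← Set.inter_union_distrib_left, ← hnames,
        hG.verts_eq, Set.inter_self]
    · have hX := hG.mem_BrS h
      rw [hBrS] at hX
      exact hX.imp (fun hX => ⟨h, hX.1⟩) fun hX => ⟨h, hX.1⟩
    · exact h.elim And.left And.left

/-- `G` is the bl-axiom graph of some cut-free derivation of `Γ`. -/
def IsCutFreeGraph (bar : α → α) (G : BLGraph) (Γ : Finset (NForm α)) : Prop :=
  ∃ R, WF bar R ∧ CutFree R ∧ concl R = Γ ∧ blaxg R = G

namespace IsCutFreeGraph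

theorem union (hG : IsCutFreeGraph bar G Γ) (hH : IsCutFreeGraph bar H Γ) :
    IsCutFreeGraph bar (G.union H) Γ := by
  obtain ⟨P, hP, hcfP, hcP, rfl⟩ := hG
  obtain ⟨Q, hQ, hcfQ, hcQ, rfl⟩ := hH
  exact ⟨.sup P Q, ⟨hP, hQ, hcP.trans hcQ.symm⟩, ⟨hcfP, hcfQ⟩, hcP, rfl⟩

theorem orI (hG : IsCutFreeGraph bar G (insert A (insert B Γ)))
    (hΓ : SFSet (insert (A.or B) Γ)) (hn : A.or B ∉ Γ) :
    IsCutFreeGraph bar G (insert (A.or B) Γ) := by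
  obtain ⟨P, hP, hcf, hc, rfl⟩ := hG
  have hside := (sfSet_insert_or hn).1 hΓ
  obtain ⟨-, -, -, hAB, hA, hB⟩ := id hside
  have hB' := notMem_of_disjoint_snames hB
  refine ⟨.orI A B P, ⟨hP, Γ, notMem_of_disjoint_snames hA, hB', NForm.ne_of_disjoint_names hAB,
    hc, hside⟩, hcf, concl_orI (notMem_insert_of_disjoint_names hAB hA) hB' hc, rfl⟩

theorem andI (hG : IsCutFreeGraph bar G (insert A Γ)) (hH : IsCutFreeGraph bar H (insert B Γ))
    (hΓ : SFSet (insert (A.and B) Γ)) (hn : A.and B ∉ Γ) :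
    IsCutFreeGraph bar (G.union H) (insert (A.and B) Γ) := by
  obtain ⟨P, hP, hcfP, hcP, rfl⟩ := hG
  obtain ⟨Q, hQ, hcfQ, hcQ, rfl⟩ := hH
  have hside := (sfSet_insert_and hn).1 hΓ
  obtain ⟨-, -, -, -, hA, hB⟩ := id hside
  have hA' := notMem_of_disjoint_snames hA
  exact ⟨.andI A B P Q, ⟨hP, hQ, Γ, hA', notMem_of_disjoint_snames hB, hcP, hcQ, hside⟩,
    ⟨hcfP, hcfQ⟩, concl_andI hA' hcP, rfl⟩

end IsCutFreeGraph

theorem HasAtomS.mem_of_forall_isAtom (h : HasAtomS Γ x a) (hatomic : ∀ A ∈ Γ, A.isAtom) :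
    .atom x a ∈ Γ := by
  obtain ⟨A, hA, h⟩ := h
  cases A with
  | atom y b =>
    obtain ⟨rfl, rfl⟩ := h
    exact hA
  | or | and => exact (hatomic _ hA).elim

theorem isCutFreeGraph_edge (hbar : Function.Involutive bar) (hfix : ∀ a, bar a ≠ a)
    (hΓ : SFSet Γ) (hatomic : ∀ A ∈ Γ, A.isAtom) (hx : .atom x a ∈ Γ)
    (hy : .atom y (bar a) ∈ Γ) :
    IsCutFreeGraph bar ⟨snames Γ, fun e X => e = s(x, y) ∧ X = snames Γ⟩ Γ := by
  have hne : NForm.atom y (bar a) ≠ .atom x a := fun h => hfix a (NForm.atom.inj h).2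
  obtain ⟨Δ, hxΔ, hyΔ, rfl⟩ : ∃ Δ, .atom x a ∉ insert (.atom y (bar a)) Δ ∧
      .atom y (bar a) ∉ Δ ∧ Γ = insert (.atom x a) (insert (.atom y (bar a)) Δ) := by
    refine ⟨(Γ.erase (.atom x a)).erase (.atom y (bar a)), ?_, Finset.notMem_erase _ _, ?_⟩ <;>
      rw [Finset.insert_erase (Finset.mem_erase.2 ⟨hne, hy⟩)]
    · exact Finset.notMem_erase _ _
    · exact (Finset.insert_erase hx).symm
  obtain ⟨hsx, hsy, hΔ, hd⟩ := (sfSet_insert_insert hxΔ hyΔ).1 hΓ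
  have hbr : BrS Δ = {snames Δ} := BrS_of_forall_isAtom fun A hA =>
    hatomic A (Finset.mem_insert_of_mem (Finset.mem_insert_of_mem hA))
  have hshape : (NForm.atom x a).shape = (negF bar (.atom y (bar a))).shape := by
    simp [NForm.shape, negF, hbar a]
  have hnames : snames (insert (.atom x a) (insert (.atom y (bar a)) Δ)) = {x, y} ∪ snames Δ := by
    rw [snames_insert, snames_insert, ← Set.union_assoc]
    rfl
  refine ⟨.ax Δ (.atom x a) (.atom y (bar a)), ⟨hshape, hsx, hsy, hΔ, hd⟩, trivial, rfl, ?_⟩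
  rw [hnames, blaxg, blwk, blid, hbr]
  refine congrArg _ (funext₂ fun e X => propext ⟨?_, ?_⟩)
  · rintro ⟨Y, Z, ⟨rfl, rfl⟩, rfl, rfl⟩
    exact ⟨rfl, rfl⟩
  · rintro ⟨rfl, rfl⟩
    exact ⟨_, _, ⟨rfl, rfl⟩, rfl, rfl⟩

theorem isCutFreeGraph_edges (hbar : Function.Involutive bar) (hfix : ∀ a, bar a ≠ a)
    (hΓ : SFSet Γ) (hatomic : ∀ A ∈ Γ, A.isAtom) {s : Finset (Sym2 ℕ)} (hs : s.Nonempty)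
    (hdual : ∀ e ∈ s, ∃ x y a, e = s(x, y) ∧ HasAtomS Γ x a ∧ HasAtomS Γ y (bar a)) :
    IsCutFreeGraph bar ⟨snames Γ, fun e X => e ∈ s ∧ X = snames Γ⟩ Γ := by
  have hedge : ∀ e ∈ s, IsCutFreeGraph bar ⟨snames Γ, fun f X => f = e ∧ X = snames Γ⟩ Γ := by
    intro e he
    obtain ⟨x, y, a, rfl, hx, hy⟩ := hdual e he
    exact isCutFreeGraph_edge hbar hfix hΓ hatomic (hx.mem_of_forall_isAtom hatomic)
      (hy.mem_of_forall_isAtom hatomic)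
  clear hdual
  induction hs using Finset.Nonempty.cons_induction with
  | singleton e => simpa using hedge e
  | cons e s _ _ ih =>
    rw [Finset.forall_mem_cons] at hedge
    simpa [BLGraph.union, or_and_right] using hedge.1.union (ih hedge.2)

theorem IsTotal.isCutFreeGraph_of_forall_isAtom (hG : IsTotal bar G Γ)
    (hbar : Function.Involutive bar) (hfix : ∀ a, bar a ≠ a) (hΓ : SFSet Γ)
    (hatomic : ∀ A ∈ Γ, A.isAtom) : IsCutFreeGraph bar G Γ := by
  have hbr := BrS_of_forall_isAtom hatomic
  have hlabel {e X} (h : G.rel e X) : X = snames Γ := by simpa [hbr] using hG.mem_BrS h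
  have hfin : G.Edges.Finite := by
    refine (((finite_snames Γ).prod (finite_snames Γ)).image fun u => s(u.1, u.2)).subset ?_
    rintro ⟨x, y⟩ ⟨X, h⟩
    have hmem := hG.edge_subset_verts h
    exact ⟨(x, y), ⟨hmem x (Sym2.mem_mk_left ..), hmem y (Sym2.mem_mk_right ..)⟩, rfl⟩
  have hne : hfin.toFinset.Nonempty := by
    obtain ⟨e, he⟩ := hG.exists_rel (hbr ▸ rfl : snames Γ ∈ BrS Γ)
    exact ⟨e, hfin.mem_toFinset.2 ⟨_, he⟩⟩
  have hG' : G = ⟨snames Γ, fun e X => e ∈ hfin.toFinset ∧ X = snames Γ⟩ := by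
    refine congrArg₂ BLGraph.mk hG.verts_eq (funext₂ fun e X => propext ⟨fun h => ?_, ?_⟩)
    · exact ⟨hfin.mem_toFinset.2 ⟨X, h⟩, hlabel h⟩
    · rintro ⟨he, rfl⟩
      obtain ⟨X, h⟩ := hfin.mem_toFinset.1 he
      exact hlabel h ▸ h
  rw [hG']
  refine isCutFreeGraph_edges hbar hfix hΓ hatomic hne fun e he => ?_
  obtain ⟨X, h⟩ := hfin.mem_toFinset.1 he
  exact hG.edge_dual h

theorem sequent_induction {motive : Finset (NForm α) → Prop}
    (atomic : ∀ Γ, (∀ A ∈ Γ, A.isAtom) → motive Γ)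
    (or : ∀ A B Γ, A.or B ∉ Γ → motive (insert A (insert B Γ)) → motive (insert (A.or B) Γ))
    (and : ∀ A B Γ, A.and B ∉ Γ → motive (insert A Γ) → motive (insert B Γ) →
      motive (insert (A.and B) Γ)) (Γ : Finset (NForm α)) : motive Γ := by
  induction hn : ∑ A ∈ Γ, sizeOf A using Nat.strong_induction_on generalizing Γ with
  | _ n ih =>
    subst hn
    have hsum (A : NForm α) (Δ : Finset (NForm α)) :
        ∑ B ∈ insert A Δ, sizeOf B ≤ sizeOf A + ∑ B ∈ Δ, sizeOf B := by
      by_cases hA : A ∈ Δ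
      · rw [Finset.insert_eq_of_mem hA]
        exact Nat.le_add_left ..
      · rw [Finset.sum_insert hA]
    by_cases hatomic : ∀ A ∈ Γ, A.isAtom
    · exact atomic Γ hatomic
    push Not at hatomic
    obtain ⟨F, hF, hnF⟩ := hatomic
    have hsumF := Finset.add_sum_erase Γ sizeOf hF
    rw [← Finset.insert_erase hF]
    cases F with
    | atom => exact (hnF trivial).elim
    | or A B =>
      simp only [NForm.or.sizeOf_spec] at hsumF
      refine or A B _ (Finset.notMem_erase _ _) (ih _ ?_ _ rfl)
      grind
    | and A B =>
      simp only [NForm.and.sizeOf_spec] at hsumF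
      refine and A B _ (Finset.notMem_erase _ _) (ih _ ?_ _ rfl) (ih _ ?_ _ rfl) <;> grind

theorem IsTotal.isCutFreeGraph (hG : IsTotal bar G Γ) (hbar : Function.Involutive bar)
    (hfix : ∀ a, bar a ≠ a) (hΓ : SFSet Γ) : IsCutFreeGraph bar G Γ := by
  induction Γ using sequent_induction generalizing G with
  | atomic Γ hatomic => exact hG.isCutFreeGraph_of_forall_isAtom hbar hfix hΓ hatomic
  | or A B Γ hn ih =>
    obtain ⟨hsA, hsB, hsΓ, hAB, hA, hB⟩ := (sfSet_insert_or hn).1 hΓ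
    have hΓ' := (sfSet_insert_insert (notMem_insert_of_disjoint_names hAB hA)
      (notMem_of_disjoint_snames hB)).2 ⟨hsA, hsB, hsΓ, hAB, hA, hB⟩
    exact (ih ((isTotal_insert_or hAB hA hB).1 hG) hΓ').orI hΓ hn
  | and A B Γ hn ihA ihB =>
    obtain ⟨hsA, hsB, hsΓ, hAB, hA, hB⟩ := (sfSet_insert_and hn).1 hΓ
    obtain ⟨G₁, G₂, hG₁, hG₂, rfl⟩ := hG.exists_union_of_insert_and hAB hA hB
    have hΓA := (sfSet_insert (notMem_of_disjoint_snames hA)).2 ⟨hsA, hA, hsΓ⟩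
    have hΓB := (sfSet_insert (notMem_of_disjoint_snames hB)).2 ⟨hsB, hB, hsΓ⟩
    exact (ihA hG₁ hΓA).andI (ihB hG₂ hΓB) hΓ hn

end GS4

theorem GS4.normalisation_by_evaluation_general {α : Type} (bar : α → α)
    (hbar : Function.Involutive bar) (hfix : ∀ a, bar a ≠ a) (P : GS4.Deriv α)
    (hP : GS4.WF bar P) :
    ∃ R : GS4.Deriv α, GS4.WF bar R ∧ GS4.CutFree R ∧ GS4.concl R = GS4.concl P ∧
      GS4.blaxg R = GS4.blaxg P :=
  (isTotal_blaxg hbar hfix hP).isCutFreeGraph hbar hfix (sfSet_concl hP)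

/-- Normalisation by evaluation: cuts between cut-free
derivations with atomic context can be evaluated to a cut-free derivation
with the same composite bl-axiom graph. -/
theorem GS4.normalisation_by_evaluation {α : Type} (bar : α → α)
    (hbar : Function.Involutive bar) (hfix : ∀ a, bar a ≠ a)
    (Γ : Finset (GS4.NForm α)) (A : GS4.NForm α)
    (hΓ : GS4.SFSet Γ) (hatomic : ∀ F ∈ Γ, F.isAtom)
    (hA : A.sharingFree) (hd : Disjoint A.names (GS4.snames Γ))
    (hAΓ : A ∉ Γ) (hAΓ' : GS4.negF bar A ∉ Γ)
    (P Q : GS4.Deriv α) (hP : GS4.WF bar P) (hQ : GS4.WF bar Q)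
    (hcfP : GS4.CutFree P) (hcfQ : GS4.CutFree Q)
    (hcP : GS4.concl P = insert A Γ)
    (hcQ : GS4.concl Q = insert (GS4.negF bar A) Γ) :
    ∃ R : GS4.Deriv α, GS4.WF bar R ∧ GS4.CutFree R ∧ GS4.concl R = Γ ∧
      GS4.blaxg R = (GS4.blaxg P).comp (GS4.blaxg Q) A.names := by
  have hcut : WF bar (.cut A P Q) := ⟨hP, hQ, Γ, hAΓ, hAΓ', hcP, hcQ, hA, hΓ, hd⟩
  have hconcl : concl (.cut A P Q) = Γ := concl_cut hAΓ hcP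
  exact hconcl ▸ normalisation_by_evaluation_general bar hbar hfix (.cut A P Q) hcut
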